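/- Weakening and contraction admissibility: if Δ₁ and Δ₂ are finite multisets of A-formulas such that every formula occurring in Δ₁ also occurs in Δ₂ (i.e., Δ₁ is a subset of Δ₂ when both are viewed as sets), and the sequent ⊢Δ₁ is provable in the additive propositional proof system, then ⊢Δ₂ is also provable. -/

import Mathlib

/-- A-formulas: purely additive propositional formulas built from
conjunction, truth, disjunction, and false (no atoms). -/
inductive AForm : Type
  | conj : AForm → AForm → AForm   -- ∧
  | tt   : AForm                   -- t (unit of ∧)
  | disj : AForm → AForm → AForm   -- ∨
  | ff   : AForm                   -- f (unit of ∨)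
  deriving DecidableEq

/-- Provability of one-sided sequents ⊢Δ (Δ a finite multiset of A-formulas)
in the purely additive propositional proof system. -/
inductive AProv : Multiset AForm → Prop
  | conj {B₁ B₂ : AForm} {Δ : Multiset AForm} :
      AProv (B₁ ::ₘ Δ) → AProv (B₂ ::ₘ Δ) → AProv (AForm.conj B₁ B₂ ::ₘ Δ)
  | tt {Δ : Multiset AForm} : AProv (AForm.tt ::ₘ Δ)
  | disjL {B₁ B₂ : AForm} {Δ : Multiset AForm} :
      AProv (B₁ ::ₘ Δ) → AProv (AForm.disj B₁ B₂ ::ₘ Δ)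
  | disjR {B₁ B₂ : AForm} {Δ : Multiset AForm} :
      AProv (B₂ ::ₘ Δ) → AProv (AForm.disj B₁ B₂ ::ₘ Δ)

/-!
A sequent is provable if and only if one of its formulas is true under the classical truth-table
semantics, and the latter condition depends only on which formulas occur in the sequent.
-/

/-- Classical truth of an A-formula. There are no atoms, so no valuation is needed. It is the
semantics for which the additive proof system is sound and complete. -/
def AForm.Holds : AForm → Prop
  | .conj B₁ B₂ => B₁.Holds ∧ B₂.Holds
  | .tt => True
  | .disj B₁ B₂ => B₁.Holds ∨ B₂.Holds
  | .ff => False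

theorem AProv.exists_mem_holds {Δ : Multiset AForm} (h : AProv Δ) : ∃ B ∈ Δ, B.Holds := by
  induction h with
  | conj _ _ ih₁ ih₂ =>
    simp only [Multiset.mem_cons, exists_eq_or_imp] at ih₁ ih₂ ⊢
    exact and_or_right.mpr ⟨ih₁, ih₂⟩
  | tt => exact ⟨.tt, Multiset.mem_cons_self _ _, trivial⟩
  | disjL _ ih =>
    simp only [Multiset.mem_cons, exists_eq_or_imp] at ih ⊢
    exact ih.imp_left Or.inl
  | disjR _ ih =>
    simp only [Multiset.mem_cons, exists_eq_or_imp] at ih ⊢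
    exact ih.imp_left Or.inr

theorem AForm.Holds.aProv_cons {B : AForm} (hB : B.Holds) (Δ : Multiset AForm) :
    AProv (B ::ₘ Δ) := by
  induction B with
  | conj B₁ B₂ ih₁ ih₂ => exact .conj (ih₁ hB.1) (ih₂ hB.2)
  | tt => exact .tt
  | disj B₁ B₂ ih₁ ih₂ => exact hB.elim (fun h₁ ↦ .disjL (ih₁ h₁)) (fun h₂ ↦ .disjR (ih₂ h₂))
  | ff => exact hB.elim

theorem aProv_iff_exists_mem_holds {Δ : Multiset AForm} : AProv Δ ↔ ∃ B ∈ Δ, B.Holds := by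
  refine ⟨AProv.exists_mem_holds, fun ⟨B, hmem, hB⟩ ↦ ?_⟩
  obtain ⟨Γ, rfl⟩ := Multiset.exists_cons_of_mem hmem
  exact hB.aProv_cons Γ

/-- Weakening and contraction admissibility: if Δ₁ ⊆ Δ₂ as sets and ⊢Δ₁
is provable, then ⊢Δ₂ is provable. -/
theorem weakening_contraction_admissibility (Δ₁ Δ₂ : Multiset AForm)
    (hsub : ∀ B : AForm, B ∈ Δ₁ → B ∈ Δ₂) (h : AProv Δ₁) : AProv Δ₂ := by
  obtain ⟨B, hmem, hB⟩ := aProv_iff_exists_mem_holds.mp h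
  exact aProv_iff_exists_mem_holds.mpr ⟨B, hsub B hmem, hB⟩
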